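/- arXiv:2109.09642 — 2 statements merged into one kernel-verified Lean document; each statement's English description precedes it below -/
import Mathlib

section
/- Fix positive integers $r,\Delta$ and a bipartite $\Delta$-bounded graph sequence $\mathcal{F}=\{F_1,F_2,\dots\}$. For any $0<t\leq n$ and any $r$-edge-colouring of $K_n$, there exists a collection of at most $64\Delta r^\Delta(\log(n/t)+2)$ pairwise vertex-disjoint monochromatic subgraphs, each isomorphic to some element of $\mathcal{F}$, whose union covers more than $n-t$ vertices of $K_n$. -/
open Finset in
/-- common neighbourhood of a finite set -/
noncomputable def cnb {V : Type*} [Fintype V] (R : V → V → Prop) (S : Finset V) : Finset V := by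
  classical exact univ.filter (fun u => ∀ v ∈ S, R v u)

open Finset in
/-- number of ways (with repetition) to extend `S` inside `A` by `m` vertices to a bad set -/
noncomputable def wcnt {V : Type*} [Fintype V] (R : V → V → Prop) (k : ℕ) (A : Finset V) :
    ℕ → Finset V → ℕ
  | 0, S => by classical exact if (cnb R S).card < k then 1 else 0
  | (m+1), S => by classical exact ∑ v ∈ A, wcnt R k A m (insert v S)

open Finset in
lemma wcnt_bad {V : Type*} [Fintype V] (R : V → V → Prop) (k : ℕ) (A : Finset V)
    (m : ℕ) (S : Finset V) (h : (cnb R S).card < k) : wcnt R k A m S = A.card ^ m := by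
  classical
  induction m generalizing S with
  | zero => simp [wcnt, h]
  | succ m ih =>
    rw [wcnt]
    rw [Finset.sum_congr rfl (g := fun _ => A.card ^ m)]
    · simp [pow_succ, mul_comm]
    · intro v _
      convert ih (insert v S) ?_
      refine lt_of_le_of_lt (card_le_card ?_) h
      intro u
      simp only [cnb, mem_filter, mem_univ, true_and, mem_insert]
      intro hu w hw
      exact hu w (Or.inr hw)

open Finset in
lemma wcnt_eq {V : Type*} [Fintype V] [DecidableEq V] (R : V → V → Prop) (k : ℕ) (A : Finset V)
    (m : ℕ) (S : Finset V) : wcnt R k A m S =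
      ∑ f ∈ Fintype.piFinset (fun _ : Fin m => A),
        (if (cnb R (S ∪ univ.image f)).card < k then 1 else 0) := by
  classical
  induction m generalizing S with
  | zero => simp [wcnt]
  | succ m ih =>
    rw [wcnt]
    have : ∀ v ∈ A, wcnt R k A m (insert v S) = _ := fun v _ => ih (insert v S)
    have h2 : (∑ v ∈ A, wcnt R k A m (insert v S)) = ∑ v ∈ A, _ := Finset.sum_congr rfl this
    have h3 : (∑ f ∈ Fintype.piFinset (fun _ : Fin (m+1) => A),
        (if (cnb R (S ∪ univ.image f)).card < k then 1 else 0)) =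
        ∑ p ∈ A ×ˢ Fintype.piFinset (fun _ : Fin m => A),
          (if (cnb R (insert p.1 S ∪ univ.image p.2)).card < k then 1 else 0) := by
      symm
      refine Finset.sum_nbij' (fun p => Fin.cons p.1 p.2) (fun f => (f 0, Fin.tail f)) ?_ ?_ ?_ ?_ ?_
      · rintro ⟨v, f⟩ h
        simp only [mem_product, Fintype.mem_piFinset] at h ⊢
        intro i
        refine Fin.cases ?_ ?_ i
        · simpa using h.1
        · intro j; simpa using h.2 j
      · intro f h
        simp only [mem_product, Fintype.mem_piFinset] at h ⊢
        exact ⟨h 0, fun j => h j.succ⟩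
      · rintro ⟨v, f⟩ h
        simp
      · intro f h
        simp
      · rintro ⟨v, f⟩ h
        have : insert v S ∪ univ.image f = S ∪ univ.image (Fin.cons v f : Fin (m+1) → V) := by
          ext u
          simp only [mem_union, mem_insert, mem_image, mem_univ, true_and, Fin.exists_fin_succ,
            Fin.cons_zero, Fin.cons_succ]
          constructor
          · rintro ((h | h) | h)
            · exact Or.inr (Or.inl h.symm)
            · exact Or.inl h
            · exact Or.inr (Or.inr h)
          · rintro (h | h | h)
            · exact Or.inl (Or.inr h)
            · exact Or.inl (Or.inl h.symm)
            · exact Or.inr h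
        simp only [this]
    rw [h3, Finset.sum_product]
    convert h2

open Finset in
lemma drc {V : Type*} [Fintype V] (R : V → V → Prop) [DecidableRel R]
    (hsym : ∀ a b, R a b → R b a)
    (r Δ k : ℕ) (hr : 0 < r) (hΔ : 0 < Δ) (hk : 0 < k)
    (hN : 8 * Δ * r ^ Δ * k ≤ Fintype.card V)
    (hdens : (Fintype.card V) ^ 2 ≤ r * ∑ v : V, (univ.filter (fun u => R v u)).card) :
    ∃ A : Finset V, (2 * Δ) ^ Δ * wcnt R k A Δ ∅ + (2 * k) ^ Δ < A.card ^ Δ := by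
  classical
  by_contra! hcon
  set N := Fintype.card V with hNdef
  have hNpos : 0 < N := lt_of_lt_of_le (by positivity) hN
  let A : (Fin Δ → V) → Finset V := fun T => univ.filter (fun v => ∀ i, R (T i) v)
  let d : V → ℕ := fun v => (univ.filter (fun u => R v u)).card
  -- first moment
  have h1 : ∑ T, (A T).card = ∑ v, d v ^ Δ := by
    have e1 : ∑ T, (A T).card = ∑ T : Fin Δ → V, ∑ v : V, if (∀ i, R (T i) v) then 1 else 0 := by
      refine Finset.sum_congr rfl fun T _ => ?_
      simp [A]
    rw [e1, Finset.sum_comm]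
    refine Finset.sum_congr rfl fun v _ => ?_
    have e2 : d v ^ Δ = (Fintype.piFinset (fun _ : Fin Δ => univ.filter (fun u => R v u))).card := by
      simp [d]
    rw [e2, ← Finset.card_filter]
    congr 1
    ext T
    simp only [mem_filter, mem_univ, true_and, Fintype.mem_piFinset]
    exact ⟨fun h i => hsym _ _ (h i), fun h i => hsym _ _ (h i)⟩
  -- bad tuples
  have h2 : ∑ T, wcnt R k (A T) Δ ∅ ≤ N ^ Δ * k ^ Δ := by
    have e1 : ∑ T, wcnt R k (A T) Δ ∅ = ∑ T : Fin Δ → V, ∑ f : Fin Δ → V,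
        if ((∀ j, f j ∈ A T) ∧ (cnb R (univ.image f)).card < k) then 1 else 0 := by
      refine Finset.sum_congr rfl fun T _ => ?_
      rw [wcnt_eq, ← Finset.card_filter, ← Finset.card_filter]
      congr 1
      ext f
      simp
    rw [e1, Finset.sum_comm]
    have e3 : ∀ f ∈ (univ : Finset (Fin Δ → V)), (∑ T : Fin Δ → V,
        if ((∀ j, f j ∈ A T) ∧ (cnb R (univ.image f)).card < k) then 1 else 0) ≤ k ^ Δ := by
      intro f _
      by_cases hb : (cnb R (univ.image f)).card < k
      · rw [← Finset.card_filter]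
        calc _ ≤ (Fintype.piFinset (fun _ : Fin Δ => cnb R (univ.image f))).card := by
              apply card_le_card
              intro T
              simp only [mem_filter, mem_univ, true_and, Fintype.mem_piFinset, A, cnb, mem_image]
              rintro ⟨h, -⟩ i v ⟨j, rfl⟩
              exact hsym _ _ (h j i)
          _ ≤ k ^ Δ := by
              simp only [Fintype.card_piFinset_const]
              exact Nat.pow_le_pow_left hb.le _
      · simp [hb]
    refine (Finset.sum_le_sum e3).trans ?_
    simp [N]
  have h3 : ∑ T, (A T).card ^ Δ ≤ N ^ Δ * (4 * Δ * k) ^ Δ := by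
    calc ∑ T, (A T).card ^ Δ ≤ ∑ T, ((2 * Δ) ^ Δ * wcnt R k (A T) Δ ∅ + (2 * k) ^ Δ) :=
          Finset.sum_le_sum fun T _ => hcon (A T)
      _ = (2 * Δ) ^ Δ * ∑ T, wcnt R k (A T) Δ ∅ + N ^ Δ * (2 * k) ^ Δ := by
          rw [Finset.sum_add_distrib, ← Finset.mul_sum]; simp [N]
      _ ≤ (2 * Δ) ^ Δ * (N ^ Δ * k ^ Δ) + N ^ Δ * (2 * k) ^ Δ := by gcongr
      _ = N ^ Δ * ((2 * Δ * k) ^ Δ + (2 * k) ^ Δ) := by rw [mul_pow (2 * Δ) k]; ring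
      _ ≤ N ^ Δ * (4 * Δ * k) ^ Δ := by
          gcongr
          have a1 : (2 * k) ^ Δ ≤ (2 * Δ * k) ^ Δ := by
            gcongr; nlinarith
          have a2 : 2 * (2 * Δ * k) ^ Δ ≤ (4 * Δ * k) ^ Δ := by
            have : 4 * Δ * k = 2 * (2 * Δ * k) := by ring
            rw [this, mul_pow 2]
            gcongr
            exact Nat.le_self_pow hΔ.ne' 2
          omega
  -- power means
  obtain ⟨D, rfl⟩ : ∃ D, Δ = D + 1 := ⟨Δ - 1, by omega⟩
  have p1 : (∑ v, d v) ^ (D+1) ≤ N ^ D * ∑ v, d v ^ (D+1) := by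
    have := pow_sum_le_card_mul_sum_pow (s := (univ : Finset V)) (f := d) (fun _ _ => Nat.zero_le _) D
    simpa [N] using this
  have p2 : (∑ T, (A T).card) ^ (D+1) ≤ (N ^ (D+1)) ^ D * ∑ T, (A T).card ^ (D+1) := by
    have := pow_sum_le_card_mul_sum_pow (s := (univ : Finset (Fin (D+1) → V)))
      (f := fun T => (A T).card) (fun _ _ => Nat.zero_le _) D
    simpa [N] using this
  have q1 : N ^ (D+2) ≤ r ^ (D+1) * ∑ T, (A T).card := by
    rw [h1]
    have : (N ^ 2) ^ (D+1) ≤ r ^ (D+1) * (N ^ D * ∑ v, d v ^ (D+1)) := by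
      calc _ ≤ (r * ∑ v, d v) ^ (D+1) := Nat.pow_le_pow_left hdens _
        _ = r ^ (D+1) * (∑ v, d v) ^ (D+1) := mul_pow _ _ _
        _ ≤ _ := by gcongr
    refine le_of_mul_le_mul_left (a := N ^ D) ?_ (by positivity)
    calc _ = (N ^ 2) ^ (D+1) := by ring
      _ ≤ _ := this
      _ = _ := by ring
  have q2 : (N ^ (D+2)) ^ (D+1) ≤ (r ^ (D+1)) ^ (D+1) * ((N ^ (D+1)) ^ D *
      (N ^ (D+1) * (4 * (D+1) * k) ^ (D+1))) := by
    calc _ ≤ (r ^ (D+1) * ∑ T, (A T).card) ^ (D+1) := Nat.pow_le_pow_left q1 _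
      _ = (r ^ (D+1)) ^ (D+1) * (∑ T, (A T).card) ^ (D+1) := mul_pow _ _ _
      _ ≤ (r ^ (D+1)) ^ (D+1) * ((N ^ (D+1)) ^ D * ∑ T, (A T).card ^ (D+1)) := by gcongr
      _ ≤ _ := by gcongr
  have q3 : (N ^ (D+2)) ^ (D+1) ≤ (N ^ (D+1) * (r ^ (D+1) * (4 * (D+1) * k))) ^ (D+1) := by
    refine q2.trans (le_of_eq ?_)
    rw [mul_pow (N ^ (D+1)), mul_pow (r ^ (D+1)), pow_succ (N ^ (D+1)) D]
    ring
  have q4 := (Nat.pow_le_pow_iff_left (by omega)).1 q3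
  have q5 : N ≤ r ^ (D+1) * (4 * (D+1) * k) := by
    refine le_of_mul_le_mul_left (a := N ^ (D+1)) ?_ (by positivity)
    calc _ = N ^ (D+2) := by ring
      _ ≤ _ := q4
  have : 0 < r ^ (D+1) * (4 * (D+1) * k) := by positivity
  nlinarith

open Finset in
lemma embedX {V : Type*} [Fintype V] (R : V → V → Prop) (Δ k : ℕ) (hΔ : 0 < Δ) (hk : 0 < k)
    (A : Finset V) (hA : (2 * Δ) ^ Δ * wcnt R k A Δ ∅ < A.card ^ Δ) (hA2 : 2 * k ≤ A.card)
    (G : SimpleGraph (Fin k)) [DecidableRel G.Adj] [DecidableEq V]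
    (hdeg : ∀ v, (univ.filter (fun u => G.Adj v u)).card ≤ Δ)
    (P : Finset (Fin k)) :
    ∃ g : Fin k → V, Set.InjOn g P ∧ (∀ x ∈ P, g x ∈ A) ∧
      ∀ y, (2 * Δ) ^ (Δ - (P.filter (G.Adj y)).card) *
        wcnt R k A (Δ - (P.filter (G.Adj y)).card) ((P.filter (G.Adj y)).image g)
          < A.card ^ (Δ - (P.filter (G.Adj y)).card) := by
  classical
  induction P using Finset.induction_on with
  | empty =>
    have : Nonempty V := by
      obtain ⟨v, _⟩ := Finset.card_pos.1 (show 0 < A.card by omega)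
      exact ⟨v⟩
    exact ⟨fun _ => this.some, by simp, by simp, fun y => by simpa using hA⟩
  | insert x P hx ih =>
    obtain ⟨g, hinj, hgA, hg⟩ := ih
    let Q : Fin k → ℕ := fun y => Δ - (P.filter (G.Adj y)).card - 1
    let S : Fin k → Finset V := fun y => (P.filter (G.Adj y)).image g
    let B : Fin k → Finset V := fun y =>
      A.filter (fun v => A.card ^ (Q y) ≤ (2 * Δ) ^ (Q y) * wcnt R k A (Q y) (insert v (S y)))
    have hlt : ∀ y, G.Adj x y → Δ - (P.filter (G.Adj y)).card = Q y + 1 := by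
      intro y hy
      have h1 := hdeg y
      have h2 : (insert x (P.filter (G.Adj y))).card ≤ (univ.filter (fun u => G.Adj y u)).card := by
        apply card_le_card
        intro u hu
        simp only [mem_insert, mem_filter, mem_univ, true_and] at hu ⊢
        rcases hu with rfl | hu
        · exact hy.symm
        · exact hu.2
      rw [card_insert_of_notMem (by simp [hx])] at h2
      simp only [Q]
      omega
    have hB : ∀ y, G.Adj x y → 2 * Δ * (B y).card ≤ A.card := by
      intro y hy
      have h := hg y
      rw [hlt y hy] at h
      rw [wcnt] at h
      have h1 : (B y).card * A.card ^ (Q y) ≤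
          (2 * Δ) ^ (Q y) * ∑ v ∈ A, wcnt R k A (Q y) (insert v (S y)) := by
        rw [Finset.mul_sum, ← smul_eq_mul]
        refine (Finset.card_nsmul_le_sum (B y) (fun v => (2 * Δ) ^ (Q y) *
          wcnt R k A (Q y) (insert v (S y))) _ ?_).trans ?_
        · intro v hv
          exact (mem_filter.1 hv).2
        · exact Finset.sum_le_sum_of_subset (filter_subset _ _)
      have h2 : (2 * Δ) ^ (Q y + 1) * ∑ v ∈ A, wcnt R k A (Q y) (insert v (S y))
          < A.card ^ (Q y + 1) := by convert h
      have h3 : A.card ^ (Q y) * (2 * Δ * (B y).card) ≤ A.card ^ (Q y) * A.card := by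
        calc _ = 2 * Δ * ((B y).card * A.card ^ (Q y)) := by ring
          _ ≤ 2 * Δ * ((2 * Δ) ^ (Q y) * ∑ v ∈ A, wcnt R k A (Q y) (insert v (S y))) := by gcongr
          _ = (2 * Δ) ^ (Q y + 1) * ∑ v ∈ A, wcnt R k A (Q y) (insert v (S y)) := by ring
          _ ≤ _ := h2.le
          _ = _ := by ring
      exact Nat.le_of_mul_le_mul_left h3 (pow_pos (by omega) _)
    let Y := univ.filter (fun u => G.Adj x u)
    have hU : 2 * (Y.biUnion B).card ≤ A.card := by
      have h1 : (Y.biUnion B).card ≤ ∑ y ∈ Y, (B y).card := card_biUnion_le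
      have h2 : ∑ y ∈ Y, 2 * Δ * (B y).card ≤ Y.card * A.card := by
        rw [← smul_eq_mul]
        exact Finset.sum_le_card_nsmul _ _ _ fun y hy => hB y (mem_filter.1 hy).2
      rw [← Finset.mul_sum] at h2
      have h3 : Y.card * A.card ≤ Δ * A.card := Nat.mul_le_mul_right _ (hdeg x)
      refine le_of_mul_le_mul_left (a := Δ) ?_ hΔ
      calc _ = 2 * Δ * (Y.biUnion B).card := by ring
        _ ≤ 2 * Δ * ∑ y ∈ Y, (B y).card := by gcongr
        _ ≤ _ := h2.trans h3
    have hP : P.card < k := by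
      have : (insert x P).card ≤ k := by simpa using card_le_univ (insert x P)
      rw [card_insert_of_notMem hx] at this
      omega
    obtain ⟨v, hvA, hv⟩ : ∃ v ∈ A, v ∉ Y.biUnion B ∪ P.image g := by
      apply exists_mem_notMem_of_card_lt_card
      have h1 := card_union_le (Y.biUnion B) (P.image g)
      have h2 : (P.image g).card ≤ P.card := card_image_le
      omega
    simp only [mem_union, not_or] at hv
    have himg : ∀ T : Finset (Fin k), x ∉ T → T.image (Function.update g x v) = T.image g := by
      intro T hT
      apply Finset.image_congr
      intro z hz
      have : z ≠ x := by rintro rfl; exact hT hz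
      simp [this]
    refine ⟨Function.update g x v, ?_, ?_, ?_⟩
    · intro a ha b hb hab
      simp only [coe_insert, Set.mem_insert_iff, mem_coe] at ha hb
      have hv2 := hv.2
      simp only [mem_image, not_exists, not_and] at hv2
      rcases ha with rfl | ha <;> rcases hb with rfl | hb
      · rfl
      · have hne : b ≠ a := by rintro rfl; exact hx hb
        simp [hne] at hab
        exact absurd hab.symm (hv2 b hb)
      · have hne : a ≠ b := by rintro rfl; exact hx ha
        simp [hne] at hab
        exact absurd hab (hv2 a ha)
      · have hne : a ≠ x := by rintro rfl; exact hx ha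
        have hne' : b ≠ x := by rintro rfl; exact hx hb
        simp [hne, hne'] at hab
        exact hinj ha hb hab
    · intro z hz
      rcases mem_insert.1 hz with rfl | hz'
      · simpa using hvA
      · have hne : z ≠ x := by rintro rfl; exact hx hz'
        simpa [hne] using hgA z hz'
    · intro y
      have hxn : x ∉ P.filter (G.Adj y) := by simp [hx]
      by_cases hy : G.Adj y x
      · rw [filter_insert, if_pos hy, card_insert_of_notMem hxn, image_insert, himg _ hxn]
        have hnb : v ∉ B y := fun h => hv.1 (mem_biUnion.2 ⟨y, by simp [Y, hy.symm], h⟩)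
        simp only [B, mem_filter, not_and, not_le] at hnb
        have := hnb hvA
        rw [← Nat.sub_sub]
        simpa [Q, S] using this
      · rw [filter_insert, if_neg hy, himg _ hxn]
        exact hg y

open Finset in
lemma embedY {V : Type*} [Fintype V] [DecidableEq V] (R : V → V → Prop) (k : ℕ)
    (G : SimpleGraph (Fin k)) [DecidableRel G.Adj] (X : Finset (Fin k))
    (g : Fin k → V) (hinj : Set.InjOn g X)
    (hg : ∀ y, k ≤ (cnb R ((X.filter (G.Adj y)).image g)).card)
    (Q : Finset (Fin k)) (hQ : Disjoint X Q) :
    ∃ h : Fin k → V, (∀ x ∈ X, h x = g x) ∧ Set.InjOn h (X ∪ Q : Finset (Fin k)) ∧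
      ∀ y ∈ Q, ∀ x ∈ X, G.Adj y x → R (h x) (h y) := by
  classical
  induction Q using Finset.induction_on with
  | empty => exact ⟨g, by simp, by simpa using hinj, by simp⟩
  | insert y Q hy ih =>
    rw [disjoint_insert_right] at hQ
    obtain ⟨h, h1, h2, h3⟩ := ih hQ.2
    have hyn : y ∉ X ∪ Q := by simp [hQ.1, hy]
    obtain ⟨v, hvA, hv⟩ : ∃ v ∈ cnb R ((X.filter (G.Adj y)).image g), v ∉ (X ∪ Q).image h := by
      apply exists_mem_notMem_of_card_lt_card
      refine lt_of_le_of_lt card_image_le (lt_of_lt_of_le ?_ (hg y))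
      have : (insert y (X ∪ Q)).card ≤ k := by simpa using card_le_univ (insert y (X ∪ Q))
      rw [card_insert_of_notMem hyn] at this
      omega
    have hne : ∀ z ∈ X ∪ Q, z ≠ y := by rintro z hz rfl; exact hyn hz
    simp only [mem_image, not_exists, not_and] at hv
    refine ⟨Function.update h y v, ?_, ?_, ?_⟩
    · intro x hx
      simp [hne x (mem_union_left _ hx), h1 x hx]
    · rw [union_insert]
      intro a ha b hb hab
      rcases mem_insert.1 ha with ha | ha <;> rcases mem_insert.1 hb with hb | hb
      · rw [ha, hb]
      · simp [ha, hne b hb] at hab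
        exact absurd hab.symm (hv b hb)
      · simp [hb, hne a ha] at hab
        exact absurd hab (hv a ha)
      · simp [hne a ha, hne b hb] at hab
        exact h2 ha hb hab
    · intro z hz x hx hadj
      rw [Function.update_of_ne (hne x (mem_union_left _ hx))]
      rcases mem_insert.1 hz with rfl | hz
      · simp only [Function.update_self, h1 x hx]
        simp only [cnb, mem_filter, mem_univ, true_and] at hvA
        exact hvA _ (mem_image_of_mem _ (mem_filter.2 ⟨hx, hadj⟩))
      · rw [Function.update_of_ne (hne z (mem_union_right _ hz))]
        exact h3 z hz x hx hadj

open Finset in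
lemma ramsey {V : Type*} [Fintype V] (r Δ k : ℕ) (hr : 0 < r) (hΔ : 0 < Δ) (hk : 0 < k)
    (G : SimpleGraph (Fin k)) (hbip : G.Colorable 2)
    (hdeg : ∀ v, (G.neighborSet v).ncard ≤ Δ)
    (c : V → V → Fin r) (hsym : ∀ a b, c a b = c b a)
    (hN : 8 * Δ * r ^ Δ * k ≤ Fintype.card V) :
    ∃ (col : Fin r) (f : Fin k ↪ V), ∀ a b, G.Adj a b → c (f a) (f b) = col := by
  classical
  have hdeg' : ∀ v, (univ.filter (fun u => G.Adj v u)).card ≤ Δ := by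
    intro v
    refine le_trans (le_of_eq ?_) (hdeg v)
    rw [← Set.ncard_coe_finset]
    congr 1
    ext u
    simp
  obtain ⟨col, hcol⟩ : ∃ col : Fin r, (Fintype.card V) ^ 2 ≤
      r * ∑ v : V, (univ.filter (fun u => c v u = col)).card := by
    by_contra! hcon
    have e : ∑ col : Fin r, ∑ v : V, (univ.filter (fun u => c v u = col)).card
        = (Fintype.card V) ^ 2 := by
      rw [Finset.sum_comm]
      have : ∀ v ∈ (univ : Finset V), ∑ col : Fin r, (univ.filter (fun u => c v u = col)).card
          = Fintype.card V := by
        intro v _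
        exact (Finset.card_eq_sum_card_fiberwise (f := fun u => c v u) (s := univ) (t := univ)
          (by simp)).symm
      rw [Finset.sum_congr rfl this]
      simp [sq]
    have hne : (univ : Finset (Fin r)).Nonempty := ⟨⟨0, hr⟩, mem_univ _⟩
    have := Finset.sum_lt_sum_of_nonempty hne (fun col _ => hcon col)
    rw [← Finset.mul_sum, e] at this
    simp at this
  let R : V → V → Prop := fun a b => c a b = col
  have hR : ∀ a b, R a b → R b a := fun a b h => by simpa [R, hsym b a] using h
  obtain ⟨A, hA⟩ := drc R hR r Δ k hr hΔ hk hN hcol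
  have hA1 : (2 * Δ) ^ Δ * wcnt R k A Δ ∅ < A.card ^ Δ := by omega
  have hA2 : 2 * k ≤ A.card := by
    have : (2 * k) ^ Δ < A.card ^ Δ := by omega
    exact (lt_of_pow_lt_pow_left₀ _ (Nat.zero_le _) this).le
  obtain ⟨C⟩ := hbip
  let X := univ.filter (fun x => C x = 0)
  let Y := univ.filter (fun x => C x ≠ 0)
  obtain ⟨g, hg1, hg2, hg3⟩ := embedX R Δ k hΔ hk A hA1 hA2 G hdeg' X
  have hg4 : ∀ y, k ≤ (cnb R ((X.filter (G.Adj y)).image g)).card := by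
    intro y
    by_contra! hlt
    have h := hg3 y
    rw [wcnt_bad R k A _ _ hlt] at h
    have : 1 ≤ (2 * Δ) ^ (Δ - (X.filter (G.Adj y)).card) := Nat.one_le_pow _ _ (by omega)
    exact absurd (Nat.le_mul_of_pos_left _ this) (not_le.2 h)
  have hXY : Disjoint X Y := disjoint_filter_filter_not _ _ _
  obtain ⟨h, -, h2, h3⟩ := embedY R k G X g hg1 hg4 Y hXY
  have hmem : ∀ z, z ∈ X ∪ Y := by intro z; simp [X, Y, em]
  refine ⟨col, ⟨h, fun a b hab => h2 (hmem a) (hmem b) hab⟩, ?_⟩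
  intro a b hab
  have hne := C.valid hab
  by_cases ha : C a = 0
  · have hb : C b ≠ 0 := fun hb => hne (ha.trans hb.symm)
    exact h3 b (by simp [Y, hb]) a (by simp [X, ha]) hab.symm
  · have hb : C b = 0 := by omega
    exact hR _ _ (h3 a (by simp [Y, ha]) b (by simp [X, hb]) hab)

open Finset in
lemma onestep (r Δ : ℕ) (hr : 0 < r) (hΔ : 0 < Δ)
    (F : (i : ℕ) → SimpleGraph (Fin i))
    (hbip : ∀ i, 1 ≤ i → (F i).Colorable 2)
    (hdeg : ∀ i, 1 ≤ i → ∀ v, ((F i).neighborSet v).ncard ≤ Δ)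
    (n : ℕ) (c : Fin n → Fin n → Fin r) (hsym : ∀ a b, c a b = c b a)
    (U : Finset (Fin n)) (hU : U.Nonempty) :
    ∃ p : Finset (Fin n), p ⊆ U ∧ U.card ≤ 64 * Δ * r ^ Δ * p.card ∧
      ∃ (i : ℕ) (_ : 1 ≤ i) (col : Fin r) (f : Fin i ↪ Fin n),
        Finset.univ.map f = p ∧ ∀ a b, (F i).Adj a b → c (f a) (f b) = col := by
  classical
  set M := 8 * Δ * r ^ Δ with hM
  have hMpos : 0 < M := by positivity
  by_cases hlt : U.card < M
  · obtain ⟨u, hu⟩ := hU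
    refine ⟨{u}, by simpa using hu, ?_, 1, le_rfl, ⟨0, hr⟩,
      ⟨fun _ => u, fun a b _ => Subsingleton.elim a b⟩, ?_, ?_⟩
    · simp; nlinarith
    · ext z; simp only [mem_map, mem_univ, true_and, mem_singleton, Function.Embedding.coeFn_mk]
      exact ⟨fun ⟨_, h⟩ => h.symm, fun h => ⟨0, h.symm⟩⟩
    · intro a b hab
      exact absurd (Subsingleton.elim a b) hab.ne
  · push Not at hlt
    set k := U.card / M with hk
    have hkpos : 0 < k := Nat.div_pos hlt hMpos
    have hkm : M * k ≤ U.card := Nat.mul_div_le _ _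
    have hkm2 : U.card < M * (k + 1) := Nat.lt_mul_div_succ _ hMpos
    obtain ⟨col, f, hf⟩ := ramsey (V := U) r Δ k hr hΔ hkpos (F k) (hbip k hkpos) (hdeg k hkpos)
      (fun a b => c a b) (fun a b => hsym _ _) (by simpa using hkm)
    refine ⟨univ.map (f.trans (Function.Embedding.subtype _)), ?_, ?_, k, hkpos, col, _, rfl, ?_⟩
    · intro u hu
      simp only [mem_map, mem_univ, true_and] at hu
      obtain ⟨a, rfl⟩ := hu
      exact (f a).2
    · simp only [card_map, card_univ, Fintype.card_fin]
      nlinarith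
    · intro a b hab
      exact hf a b hab

open Finset in
lemma greedy (n : ℕ) (good : Finset (Fin n) → Prop) (C : ℝ) (hC : 1 ≤ C)
    (hstep : ∀ U : Finset (Fin n), U.Nonempty → ∃ p, p ⊆ U ∧ (U.card : ℝ) ≤ C * p.card ∧ good p)
    (s : ℕ) :
    ∃ P : Finset (Finset (Fin n)), P.card ≤ s ∧ (∀ p ∈ P, ∀ q ∈ P, p ≠ q → Disjoint p q) ∧
      (∀ p ∈ P, good p) ∧ (((P.biUnion id)ᶜ.card : ℕ) : ℝ) ≤ n * (1 - 1 / C) ^ s := by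
  classical
  have hC0 : 0 ≤ 1 - 1 / C := by
    rw [sub_nonneg, div_le_one (by linarith)]; exact hC
  induction s with
  | zero => exact ⟨∅, by simp⟩
  | succ s ih =>
    obtain ⟨P, h1, h2, h3, h4⟩ := ih
    rcases (P.biUnion id)ᶜ.eq_empty_or_nonempty with he | hne
    · refine ⟨P, by omega, h2, h3, ?_⟩
      rw [he, card_empty, Nat.cast_zero]
      exact mul_nonneg (Nat.cast_nonneg _) (pow_nonneg hC0 _)
    · obtain ⟨p, hp1, hp2, hp3⟩ := hstep _ hne
      have hd : ∀ q ∈ P, Disjoint p q := by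
        intro q hq
        rw [Finset.disjoint_left]
        intro u hu hu'
        have := hp1 hu
        simp only [mem_compl, mem_biUnion, id, not_exists, not_and] at this
        exact this q hq hu'
      refine ⟨insert p P, (card_insert_le _ _).trans (by omega), ?_, ?_, ?_⟩
      · intro a ha b hb hab
        rcases mem_insert.1 ha with ha | ha <;> rcases mem_insert.1 hb with hb | hb
        · exact absurd (ha.trans hb.symm) hab
        · rw [ha]; exact hd b hb
        · rw [hb]; exact (hd a ha).symm
        · exact h2 a ha b hb hab
      · intro q hq
        rcases mem_insert.1 hq with rfl | hq
        · exact hp3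
        · exact h3 q hq
      · have e : ((insert p P).biUnion id)ᶜ = (P.biUnion id)ᶜ \ p := by
          ext u; simp; tauto
        rw [e, card_sdiff_of_subset hp1, Nat.cast_sub (card_le_card hp1), pow_succ]
        have : ((P.biUnion id)ᶜ.card : ℝ) / C ≤ p.card := by
          rw [div_le_iff₀ (by linarith)]; linarith
        calc _ ≤ ((P.biUnion id)ᶜ.card : ℝ) * (1 - 1 / C) := by
              rw [mul_sub, mul_one, mul_one_div]; linarith
          _ ≤ (n * (1 - 1 / C) ^ s) * (1 - 1 / C) := by gcongr
          _ = _ := by ring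

/-- Covering all but fewer than `t` vertices by few vertex-disjoint monochromatic
subgraphs from a bipartite Δ-bounded graph sequence. -/
theorem stmt_4 (r Δ : ℕ) (hr : 0 < r) (hΔ : 0 < Δ)
    (F : (i : ℕ) → SimpleGraph (Fin i))
    (hbip : ∀ i, 1 ≤ i → (F i).Colorable 2)
    (hdeg : ∀ i, 1 ≤ i → ∀ v, ((F i).neighborSet v).ncard ≤ Δ)
    (n : ℕ) (t : ℝ) (ht0 : 0 < t) (htn : t ≤ n)
    (c : Fin n → Fin n → Fin r) (hsym : ∀ a b, c a b = c b a) :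
    ∃ (s : ℕ) (parts : Fin s → Finset (Fin n)),
      (s : ℝ) ≤ 64 * Δ * (r : ℝ) ^ Δ * (Real.log ((n : ℝ) / t) + 2) ∧
      (∀ j j', j ≠ j' → Disjoint (parts j) (parts j')) ∧
      (n : ℝ) - t < ((Finset.univ.biUnion parts).card : ℝ) ∧
      ∀ j, ∃ (i : ℕ) (_ : 1 ≤ i) (col : Fin r) (f : Fin i ↪ Fin n),
        Finset.univ.map f = parts j ∧
        ∀ a b, (F i).Adj a b → c (f a) (f b) = col := by
  classical
  have hn : (0 : ℝ) < n := lt_of_lt_of_le ht0 htn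
  set C : ℝ := 64 * Δ * (r : ℝ) ^ Δ with hC
  have hC1 : 1 ≤ C := by
    have : 1 ≤ 64 * Δ * r ^ Δ := Nat.one_le_iff_ne_zero.2 (by positivity)
    rw [hC]; exact_mod_cast this
  have hlog : 0 ≤ Real.log ((n : ℝ) / t) := Real.log_nonneg (by rw [le_div_iff₀ ht0]; linarith)
  obtain ⟨P, h1, h2, h3, h4⟩ := greedy n (fun p => ∃ (i : ℕ) (_ : 1 ≤ i) (col : Fin r)
      (f : Fin i ↪ Fin n), Finset.univ.map f = p ∧ ∀ a b, (F i).Adj a b → c (f a) (f b) = col)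
      C hC1 (by
        intro U hU
        obtain ⟨p, hp1, hp2, hp3⟩ := onestep r Δ hr hΔ F hbip hdeg n c hsym U hU
        refine ⟨p, hp1, ?_, hp3⟩
        rw [hC]; exact_mod_cast hp2) (⌊C * Real.log ((n : ℝ) / t)⌋₊ + 1)
  refine ⟨P.card, fun j => (P.equivFin.symm j : Finset (Fin n)), ?_, ?_, ?_, ?_⟩
  · have : (P.card : ℝ) ≤ ⌊C * Real.log ((n : ℝ) / t)⌋₊ + 1 := by exact_mod_cast h1
    have h5 := Nat.floor_le (show 0 ≤ C * Real.log ((n : ℝ) / t) by positivity)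
    nlinarith
  · intro j j' hj
    apply h2 _ (P.equivFin.symm j).2 _ (P.equivFin.symm j').2
    intro h
    exact hj (P.equivFin.symm.injective (Subtype.ext h))
  · have e : Finset.univ.biUnion (fun j => (P.equivFin.symm j : Finset (Fin n))) = P.biUnion id := by
      ext u
      simp only [Finset.mem_biUnion, Finset.mem_univ, true_and, id]
      constructor
      · rintro ⟨j, hj⟩; exact ⟨_, (P.equivFin.symm j).2, hj⟩
      · rintro ⟨p, hp, hu⟩; exact ⟨P.equivFin ⟨p, hp⟩, by simpa using hu⟩
    rw [e]
    have hlt : (n : ℝ) * (1 - 1 / C) ^ (⌊C * Real.log ((n : ℝ) / t)⌋₊ + 1) < t := by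
      have hb : 1 - 1 / C ≤ Real.exp (-(1 / C)) := by
        have := Real.add_one_le_exp (-(1 / C)); linarith
      have hC0 : 0 ≤ 1 - 1 / C := by
        rw [sub_nonneg, div_le_one (by linarith)]; exact hC1
      have hf := Nat.lt_floor_add_one (C * Real.log ((n : ℝ) / t))
      set s := ⌊C * Real.log ((n : ℝ) / t)⌋₊ + 1 with hs
      have hs' : C * Real.log ((n : ℝ) / t) < (s : ℝ) := by rw [hs]; push_cast; exact hf
      calc (n : ℝ) * (1 - 1 / C) ^ s ≤ n * (Real.exp (-(1 / C))) ^ s := by gcongr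
        _ = n * Real.exp (-(s / C)) := by rw [← Real.exp_nat_mul]; ring_nf
        _ < n * Real.exp (- Real.log ((n : ℝ) / t)) := by
            gcongr
            rw [lt_div_iff₀ (by linarith)]; linarith
        _ = t := by
            rw [Real.exp_neg, Real.exp_log (by positivity)]; field_simp
    have hc : ((P.biUnion id).card : ℝ) + ((P.biUnion id)ᶜ.card : ℝ) = n := by
      have := Finset.card_add_card_compl (P.biUnion id)
      simp only [Fintype.card_fin] at this
      exact_mod_cast this
    linarith
  · intro j
    exact h3 _ (P.equivFin.symm j).2
end

section
/- Fix positive integers $r,\Delta$ and a bipartite $\Delta$-bounded graph sequence $\mathcal{F}$. Any $r$-edge-colouring of $K_n$ admits a monochromatic $\mathcal{F}$-tiling of size at most $64\Delta r^\Delta(\log n+2)$, i.e. a collection of at most this many monochromatic subgraphs, each isomorphic to an element of $\mathcal{F}$, whose vertex sets partition $V(K_n)$. -/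
section Helpers
open Finset
open scoped Classical

/-- common neighbourhood of `S` -/
noncomputable def comNb {V : Type} [Fintype V] (R : V → V → Prop) (S : Finset V) : Finset V :=
  univ.filter (fun u => ∀ v ∈ S, R v u)

/-- weighted count of bad extensions of `S` by `k` elements of `U` -/
noncomputable def wt {V : Type} [Fintype V] (R : V → V → Prop) (m : ℕ) (U : Finset V) :
    ℕ → Finset V → ℕ
  | 0, S => if (comNb R S).card < m then 1 else 0
  | k+1, S => ∑ v ∈ U, wt R m U k (insert v S)

noncomputable def nbT {V : Type} [Fintype V] (R : V → V → Prop) {d : ℕ} (T : Fin d → V) :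
    Finset V := univ.filter (fun v => ∀ i, R v (T i))

lemma card_T {V : Type} [Fintype V] (R : V → V → Prop) (d : ℕ) (S : Finset V) :
    (univ.filter (fun T : Fin d → V => S ⊆ nbT R T)).card = (comNb R S).card ^ d := by
  have : (univ.filter (fun T : Fin d → V => S ⊆ nbT R T))
      = Fintype.piFinset (fun _ : Fin d => comNb R S) := by
    ext T
    simp only [mem_filter, mem_univ, true_and, Fintype.mem_piFinset, comNb, nbT, subset_iff]
    exact ⟨fun h i v hv => h hv i, fun h v hv i => h i v hv⟩
  rw [this]
  simp

lemma sum_wt {V : Type} [Fintype V] (R : V → V → Prop) (m d : ℕ) (k : ℕ) : ∀ S : Finset V,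
    ∑ T : Fin d → V, (if S ⊆ nbT R T then wt R m (nbT R T) k S else 0)
      ≤ (Fintype.card V) ^ k * m ^ d := by
  induction k with
  | zero =>
    intro S
    by_cases hS : (comNb R S).card < m
    · simp only [wt, hS, if_true, pow_zero, one_mul]
      rw [← card_filter, card_T]
      exact Nat.pow_le_pow_left hS.le _
    · simp [wt, hS]
  | succ k ih =>
    intro S
    have key : ∀ T : Fin d → V, (if S ⊆ nbT R T then wt R m (nbT R T) (k+1) S else 0)
        ≤ ∑ v : V, (if insert v S ⊆ nbT R T then wt R m (nbT R T) k (insert v S) else 0) := by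
      intro T
      split_ifs with h
      · rw [wt, ← sum_filter]
        apply le_of_eq
        apply sum_congr _ (fun _ _ => rfl)
        ext v
        simp [insert_subset_iff, h]
      · exact Nat.zero_le _
    calc _ ≤ ∑ T : Fin d → V, ∑ v : V,
          (if insert v S ⊆ nbT R T then wt R m (nbT R T) k (insert v S) else 0) :=
          sum_le_sum (fun T _ => key T)
      _ = ∑ v : V, ∑ T : Fin d → V,
          (if insert v S ⊆ nbT R T then wt R m (nbT R T) k (insert v S) else 0) := sum_comm
      _ ≤ ∑ v : V, (Fintype.card V) ^ k * m ^ d := sum_le_sum (fun v _ => ih _)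
      _ = _ := by simp [pow_succ]; ring

lemma sum_card_nbT {V : Type} [Fintype V] (R : V → V → Prop) (d : ℕ) :
    ∑ T : Fin d → V, (nbT R T).card = ∑ v : V, (comNb R {v}).card ^ d := by
  simp_rw [← card_T, card_filter]
  rw [sum_comm]
  apply sum_congr rfl
  intro T _
  rw [← card_filter]
  congr 1
  ext v
  simp

lemma exists_U {V : Type} [Fintype V] (R : V → V → Prop) (r d m : ℕ) (hr : 0 < r)
    (hm : 0 < m)
    (hdens : (Fintype.card V) ^ 2 ≤ r * ∑ v : V, (comNb R {v}).card)
    (hN : 8 * (d+1) * r ^ (d+1) * m ≤ Fintype.card V) :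
    ∃ U : Finset V, 2 * m ≤ U.card ∧
      (2 * (d+1)) ^ (d+1) * wt R m U (d+1) ∅ < U.card ^ (d+1) := by
  by_contra hcon
  push Not at hcon
  set N := Fintype.card V with hNdef
  have hNpos : 0 < N := lt_of_lt_of_le (by positivity) hN
  have hub : ∀ T : Fin (d+1) → V, (nbT R T).card ^ (d+1) ≤
      (2 * (d+1)) ^ (d+1) * wt R m (nbT R T) (d+1) ∅ + (2*m)^(d+1) := by
    intro T
    by_cases h : 2 * m ≤ (nbT R T).card
    · exact (hcon _ h).trans (Nat.le_add_right _ _)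
    · push Not at h
      exact (Nat.pow_le_pow_left h.le _).trans (Nat.le_add_left _ _)
  have hw := sum_wt R m (d+1) (d+1) (∅ : Finset V)
  simp only [empty_subset, if_true] at hw
  have h1 : ∑ T : Fin (d+1) → V, (nbT R T).card ^ (d+1) ≤
      (2 * (d+1)) ^ (d+1) * (N^(d+1) * m^(d+1)) + N^(d+1) * (2*m)^(d+1) := by
    calc _ ≤ ∑ T : Fin (d+1) → V, ((2 * (d+1)) ^ (d+1) * wt R m (nbT R T) (d+1) ∅ + (2*m)^(d+1)) :=
          sum_le_sum (fun T _ => hub T)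
      _ = (2 * (d+1)) ^ (d+1) * (∑ T : Fin (d+1) → V, wt R m (nbT R T) (d+1) ∅)
            + N^(d+1) * (2*m)^(d+1) := by
          rw [sum_add_distrib, ← mul_sum]; simp [hNdef]
      _ ≤ _ := by gcongr
  have h1' : (∑ T : Fin (d+1) → V, ((nbT R T).card : ℝ) ^ (d+1)) ≤
      (2 * (d+1)) ^ (d+1) * (N^(d+1) * m^(d+1)) + N^(d+1) * (2*m)^(d+1) := by exact_mod_cast h1
  have hNr : (0:ℝ) < N := by exact_mod_cast hNpos
  have hrr : (0:ℝ) < r := by exact_mod_cast hr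
  have hp1 := pow_sum_div_card_le_sum_pow (s := (univ : Finset V))
    (f := fun v => ((comNb R {v}).card : ℝ)) (fun _ _ => Nat.cast_nonneg _) d
  have hp2 := pow_sum_div_card_le_sum_pow (s := (univ : Finset (Fin (d+1) → V)))
    (f := fun T => ((nbT R T).card : ℝ)) (fun _ _ => Nat.cast_nonneg _) d
  have hs : (∑ T : Fin (d+1) → V, ((nbT R T).card : ℝ))
      = ∑ v : V, ((comNb R {v}).card : ℝ) ^ (d+1) := by exact_mod_cast sum_card_nbT R (d+1)
  have hdens' : (N:ℝ)^2 / r ≤ ∑ v : V, ((comNb R {v}).card : ℝ) := by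
    rw [div_le_iff₀ hrr, mul_comm]
    exact_mod_cast hdens
  have hN' : (8 * (d+1) * m : ℝ) ≤ N / r^(d+1) := by
    rw [le_div_iff₀ (by positivity)]
    have : ((8 * (d+1) * r ^ (d+1) * m : ℕ) : ℝ) ≤ N := by exact_mod_cast hN
    push_cast at this
    linarith
  have hcT : ((univ : Finset (Fin (d+1) → V)).card : ℝ) = (N:ℝ)^(d+1) := by
    simp [hNdef]
  have hcV : ((univ : Finset V).card : ℝ) = (N:ℝ) := by simp [hNdef]
  rw [hcV] at hp1
  rw [hcT, hs] at hp2
  have a1 : (N:ℝ)^(d+1) * (N / r^(d+1)) ≤ ∑ v : V, ((comNb R {v}).card : ℝ) ^ (d+1) := by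
    refine le_trans ?_ hp1
    rw [le_div_iff₀ (by positivity)]
    calc (N:ℝ)^(d+1) * (N / r^(d+1)) * N^d = ((N:ℝ)^2 / r)^(d+1) := by
          rw [div_pow]; field_simp; ring
      _ ≤ _ := by gcongr
  have a2 : (N:ℝ)^(d+1) * (N / r^(d+1))^(d+1) ≤ ∑ T : Fin (d+1) → V, ((nbT R T).card : ℝ)^(d+1) := by
    refine le_trans ?_ hp2
    rw [le_div_iff₀ (by positivity)]
    calc (N:ℝ)^(d+1) * (N / r^(d+1))^(d+1) * (N^(d+1))^d
        = ((N:ℝ)^(d+1) * (N / r^(d+1)))^(d+1) := by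
          rw [mul_pow ((N:ℝ)^(d+1)), pow_succ ((N:ℝ)^(d+1)) d]; ring
      _ ≤ _ := by gcongr
  have a3 : (N:ℝ)^(d+1) * (8 * (d+1) * m : ℝ)^(d+1) ≤ (N:ℝ)^(d+1) * (N / r^(d+1))^(d+1) := by
    gcongr
  have a4 : (N:ℝ)^(d+1) * (8 * (d+1) * m : ℝ)^(d+1) ≤
      (N:ℝ)^(d+1) * ((2 * (d+1) * m : ℝ)^(d+1) + (2*m)^(d+1)) := by
    refine (a3.trans (a2.trans h1')).trans (le_of_eq ?_)
    rw [mul_pow (2 * ((d:ℝ)+1)) (m:ℝ)]; ring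
  have a5 := le_of_mul_le_mul_left a4 (by positivity)
  have hmr : (0:ℝ) < m := by exact_mod_cast hm
  have a6 : (2 * m : ℝ)^(d+1) ≤ (2 * (d+1) * m : ℝ)^(d+1) := by
    gcongr
    have : (0:ℝ) ≤ d := by positivity
    nlinarith
  have a7 : (8 * (d+1) * m : ℝ)^(d+1) = 4^(d+1) * (2 * (d+1) * m : ℝ)^(d+1) := by
    rw [← mul_pow]; ring
  have a8 : (4:ℝ) ≤ 4^(d+1) := by
    calc (4:ℝ) = 4^1 := by norm_num
      _ ≤ _ := pow_le_pow_right₀ (by norm_num) (by omega)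
  have a9 : (0:ℝ) < (2 * (d+1) * m : ℝ)^(d+1) := by positivity
  nlinarith

lemma good_card {V : Type} [Fintype V] (R : V → V → Prop) (m D : ℕ) (hD : 0 < D) (U : Finset V)
    (k : ℕ) : ∀ S : Finset V, (2*D)^k * wt R m U k S < U.card ^ k → m ≤ (comNb R S).card := by
  induction k with
  | zero =>
    intro S h
    by_contra hc
    simp [wt, not_le.mp hc] at h
  | succ k ih =>
    intro S h
    have : ∃ v ∈ U, (2*D)^k * wt R m U k (insert v S) < U.card ^ k := by
      by_contra hc
      push Not at hc
      have h2 := sum_le_sum hc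
      rw [← mul_sum] at h2
      simp only [sum_const, smul_eq_mul] at h2
      rw [wt] at h
      have h3 : (2*D)^k * ∑ v ∈ U, wt R m U k (insert v S) ≤
        (2*D)^(k+1) * ∑ v ∈ U, wt R m U k (insert v S) := by
        gcongr <;> omega
      rw [pow_succ U.card] at h
      nlinarith
    obtain ⟨v, _, hv⟩ := this
    refine (ih _ hv).trans (card_le_card ?_)
    intro u hu
    simp only [comNb, mem_filter, mem_univ, true_and] at hu ⊢
    exact fun w hw => hu w (mem_insert_of_mem hw)

lemma forb {V : Type} [Fintype V] (R : V → V → Prop) (m D : ℕ) (U : Finset V)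
    (k : ℕ) (S : Finset V) (h : (2*D)^(k+1) * wt R m U (k+1) S < U.card ^ (k+1)) :
    2 * D * (U.filter (fun v => U.card ^ k ≤ (2*D)^k * wt R m U k (insert v S))).card
      ≤ U.card := by
  set B := U.filter (fun v => U.card ^ k ≤ (2*D)^k * wt R m U k (insert v S)) with hB
  have h1 : B.card * U.card ^ k ≤ (2*D)^k * wt R m U (k+1) S := by
    rw [wt, mul_sum]
    calc B.card * U.card ^ k = ∑ v ∈ B, U.card ^ k := by simp
      _ ≤ ∑ v ∈ B, (2*D)^k * wt R m U k (insert v S) :=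
          sum_le_sum (fun v hv => (mem_filter.mp hv).2)
      _ ≤ _ := sum_le_sum_of_subset (filter_subset _ _)
  by_contra hc
  push Not at hc
  have h2 : U.card ^ (k+1) ≤ (2 * D * B.card) * U.card ^ k := by
    rw [pow_succ, mul_comm]; gcongr
  have h3 : (2 * D * B.card) * U.card ^ k ≤ (2*D)^(k+1) * wt R m U (k+1) S := by
    calc _ = 2 * D * (B.card * U.card ^ k) := by ring
      _ ≤ 2 * D * ((2*D)^k * wt R m U (k+1) S) := by gcongr
      _ = _ := by ring
  omega

lemma embedA {V W : Type} [Fintype V] [Fintype W] (R : V → V → Prop) (D : ℕ) (hD : 0 < D)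
    (hW : 0 < Fintype.card W) (H : SimpleGraph W)
    (hdeg : ∀ w, (univ.filter (fun b => H.Adj w b)).card ≤ D)
    (U : Finset V) (hU : 2 * Fintype.card W ≤ U.card)
    (hw : (2*D)^D * wt R (Fintype.card W) U D ∅ < U.card ^ D) (A : Finset W) :
    ∃ g : W → V, Set.InjOn g A ∧ ∀ b, 
      (2*D)^(D - (A.filter (fun a => H.Adj b a)).card) *
        wt R (Fintype.card W) U (D - (A.filter (fun a => H.Adj b a)).card)
          ((A.filter (fun a => H.Adj b a)).image g)
        < U.card ^ (D - (A.filter (fun a => H.Adj b a)).card) := by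
  set m := Fintype.card W with hm
  induction A using Finset.induction_on with
  | empty =>
    have : U.Nonempty := card_pos.mp (by omega)
    obtain ⟨u, hu⟩ := this
    exact ⟨fun _ => u, by simp, fun b => by simpa using hw⟩
  | insert a A ha ih =>
    obtain ⟨g, hinj, hg⟩ := ih
    let nA : W → Finset W := fun b => A.filter (fun a => H.Adj b a)
    have hnA : ∀ b, H.Adj a b → (nA b).card + 1 ≤ D := by
      intro b hb
      refine le_trans ?_ (hdeg b)
      have : a ∉ nA b := by simp [nA, ha]
      rw [← card_insert_of_notMem this]
      apply card_le_card
      intro x hx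
      simp only [mem_insert, nA, mem_filter, mem_univ, true_and] at hx ⊢
      rcases hx with rfl | hx
      · exact hb.symm
      · exact hx.2
    let k : W → ℕ := fun b => D - (nA b).card - 1
    let Fb : W → Finset V := fun b =>
      U.filter (fun v => U.card ^ (k b) ≤ (2*D)^(k b) * wt R m U (k b) (insert v ((nA b).image g)))
    have hF : ∀ b, H.Adj a b → 2 * D * (Fb b).card ≤ U.card := by
      intro b hb
      apply forb
      have := hg b
      have e : D - (nA b).card = k b + 1 := by have := hnA b hb; simp only [k]; omega
      rw [show D - (A.filter (fun a => H.Adj b a)).card = k b + 1 from e] at this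
      exact this
    let NB := univ.filter (fun b => H.Adj a b)
    have hFU : 2 * (NB.biUnion Fb).card ≤ U.card := by
      have h1 : (NB.biUnion Fb).card ≤ ∑ b ∈ NB, (Fb b).card := card_biUnion_le
      have h2 : ∑ b ∈ NB, (2 * D * (Fb b).card) ≤ NB.card * U.card := by
        calc _ ≤ ∑ b ∈ NB, U.card := sum_le_sum (fun b hb => hF b (mem_filter.mp hb).2)
          _ = _ := by simp
      rw [← mul_sum] at h2
      have h3 : NB.card * U.card ≤ D * U.card := Nat.mul_le_mul_right _ (hdeg a)
      have h4 : D * (2 * (NB.biUnion Fb).card) ≤ D * U.card := by nlinarith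
      exact Nat.le_of_mul_le_mul_left h4 hD
    have hused : (A.image g).card < m := by
      calc (A.image g).card ≤ A.card := card_image_le
        _ < (insert a A).card := by rw [card_insert_of_notMem ha]; omega
        _ ≤ m := card_le_univ _
    have : ∃ v ∈ U, v ∉ NB.biUnion Fb ∪ A.image g := by
      apply exists_mem_notMem_of_card_lt_card
      have := card_union_le (NB.biUnion Fb) (A.image g)
      omega
    obtain ⟨v, hvU, hv⟩ := this
    rw [mem_union, not_or] at hv
    obtain ⟨hv1, hv2⟩ := hv
    have hup : ∀ x ∈ A, Function.update g a v x = g x := by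
      intro x hx
      exact Function.update_of_ne (by rintro rfl; exact ha hx) _ _
    refine ⟨Function.update g a v, ?_, ?_⟩
    · rw [coe_insert, Set.injOn_insert (by simpa using ha)]
      constructor
      · intro x hx y hy hxy
        rw [hup x hx, hup y hy] at hxy
        exact hinj hx hy hxy
      · rintro ⟨x, hx, hxy⟩
        rw [hup x hx, Function.update_self] at hxy
        exact hv2 (mem_image.mpr ⟨x, hx, hxy⟩)
    · intro b
      have himg : (nA b).image (Function.update g a v) = (nA b).image g :=
        image_congr (fun x hx => hup x (mem_filter.mp hx).1)
      by_cases hb : H.Adj a b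
      · have e : (insert a A).filter (fun a => H.Adj b a) = insert a (nA b) := by
          rw [filter_insert, if_pos hb.symm]
        have hc : (insert a (nA b)).card = (nA b).card + 1 :=
          card_insert_of_notMem (by simp [nA, ha])
        rw [e, hc, image_insert, himg, Function.update_self]
        have hvb : v ∉ Fb b := fun h => hv1 (mem_biUnion.mpr ⟨b, by simp [NB, hb], h⟩)
        simp only [Fb, mem_filter, hvU, true_and, not_le] at hvb
        exact hvb
      · have e : (insert a A).filter (fun a => H.Adj b a) = nA b := by
          rw [filter_insert, if_neg (fun h => hb h.symm)]
        rw [e, himg]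
        exact hg b

lemma embedB {V W : Type} [Fintype V] [Fintype W] (R : V → V → Prop) (H : SimpleGraph W)
    (A : Finset W) (g₀ : W → V) (hinj : Set.InjOn g₀ A)
    (hg : ∀ b, Fintype.card W ≤ (comNb R ((A.filter (fun a => H.Adj b a)).image g₀)).card)
    (B : Finset W) (hAB : Disjoint A B) :
    ∃ g : W → V, Set.InjOn g ↑(A ∪ B) ∧ (∀ a ∈ A, g a = g₀ a) ∧
      ∀ a ∈ A, ∀ b ∈ B, H.Adj a b → R (g a) (g b) := by
  induction B using Finset.induction_on with
  | empty => exact ⟨g₀, by simpa using hinj, fun _ _ => rfl, by simp⟩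
  | insert b B hb ih =>
    rw [disjoint_insert_right] at hAB
    obtain ⟨g, h1, h2, h3⟩ := ih hAB.2
    have hb' : b ∉ A ∪ B := by simp [hb, hAB.1]
    have hused : ((A ∪ B).image g).card < Fintype.card W := by
      calc ((A ∪ B).image g).card ≤ (A ∪ B).card := card_image_le
        _ < (insert b (A ∪ B)).card := by rw [card_insert_of_notMem hb']; omega
        _ ≤ _ := card_le_univ _
    obtain ⟨v, hv, hv2⟩ := exists_mem_notMem_of_card_lt_card (hused.trans_le (hg b))
    have hup : ∀ x ∈ A ∪ B, Function.update g b v x = g x := by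
      intro x hx
      exact Function.update_of_ne (by rintro rfl; exact hb' hx) _ _
    refine ⟨Function.update g b v, ?_, ?_, ?_⟩
    · rw [union_insert, coe_insert, Set.injOn_insert (by exact_mod_cast hb')]
      constructor
      · intro x hx y hy hxy
        rw [hup x hx, hup y hy] at hxy
        exact h1 hx hy hxy
      · rintro ⟨x, hx, hxy⟩
        rw [hup x hx, Function.update_self] at hxy
        exact hv2 (mem_image.mpr ⟨x, hx, hxy⟩)
    · intro a ha
      rw [hup a (mem_union_left _ ha), h2 a ha]
    · intro a ha b' hb'' hadj
      rw [hup a (mem_union_left _ ha)]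
      rcases mem_insert.mp hb'' with rfl | hbB
      · rw [Function.update_self, h2 a ha]
        simp only [comNb, mem_filter, mem_univ, true_and] at hv
        exact hv _ (mem_image.mpr ⟨a, by simp [ha, hadj.symm], rfl⟩)
      · rw [hup b' (mem_union_right _ hbB)]
        exact h3 a ha b' hbB hadj

lemma embed_main {V W : Type} [Fintype V] [Fintype W] (r D : ℕ) (hr : 0 < r) (hD : 0 < D)
    (hW : 0 < Fintype.card W) (H : SimpleGraph W) (hcol : H.Colorable 2)
    (hdeg : ∀ w, (univ.filter (fun b => H.Adj w b)).card ≤ D)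
    (c : V → V → Fin r) (hsym : ∀ a b, c a b = c b a)
    (hN : 8 * D * r ^ D * Fintype.card W ≤ Fintype.card V) :
    ∃ (col : Fin r) (f : W ↪ V), ∀ a b, H.Adj a b → c (f a) (f b) = col := by
  have hpig : ∃ col : Fin r, (Fintype.card V) ^ 2 ≤
      r * ∑ v : V, (comNb (fun a b => c a b = col) {v}).card := by
    by_contra hc
    push Not at hc
    have h1 : ∑ col : Fin r, ∑ v : V, (comNb (fun a b => c a b = col) {v}).card
        = (Fintype.card V)^2 := by
      rw [sum_comm]
      have : ∀ v : V, ∑ col : Fin r, (comNb (fun a b => c a b = col) {v}).card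
          = Fintype.card V := by
        intro v
        simp only [comNb, mem_singleton, forall_eq]
        rw [← card_univ]
        exact (card_eq_sum_card_fiberwise (fun _ _ => mem_coe.mpr (mem_univ _))).symm
      rw [sum_congr rfl (fun v _ => this v)]
      simp [sq]
    have : Nonempty (Fin r) := ⟨⟨0, hr⟩⟩
    have h2 := sum_lt_sum_of_nonempty (univ_nonempty (α := Fin r)) (fun col _ => hc col)
    rw [← mul_sum, h1] at h2
    simp at h2
  obtain ⟨col, hd⟩ := hpig
  refine ⟨col, ?_⟩
  obtain ⟨d, rfl⟩ : ∃ d, D = d + 1 := ⟨D - 1, by omega⟩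
  obtain ⟨U, hU, hw⟩ := exists_U _ r d (Fintype.card W) hr hW hd hN
  obtain ⟨C⟩ := hcol
  set A := univ.filter (fun w => C w = 0) with hA
  obtain ⟨g₀, hinj, hg⟩ := embedA _ (d+1) hD hW H hdeg U hU hw A
  obtain ⟨g, g1, g2, g3⟩ := embedB (fun a b => c a b = col) H A g₀ hinj
    (fun b => good_card _ _ _ hD _ _ _ (hg b)) Aᶜ disjoint_compl_right
  rw [union_compl, coe_univ, Set.injOn_univ] at g1
  refine ⟨⟨g, g1⟩, ?_⟩
  intro a b hab
  have hne := C.valid hab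
  change c (g a) (g b) = col
  by_cases ha : a ∈ A
  · apply g3 a ha b _ hab
    simp only [hA, mem_compl, mem_filter, mem_univ, true_and] at ha ⊢
    exact fun h => hne (ha.trans h.symm)
  · rw [hsym]
    apply g3 b _ a (mem_compl.mpr ha) hab.symm
    simp only [hA, mem_filter, mem_univ, true_and] at ha ⊢
    omega

lemma tiling (r D n : ℕ) (hr : 0 < r) (hD : 0 < D)
    (F : (i : ℕ) → SimpleGraph (Fin i))
    (hbip : ∀ i, 1 ≤ i → (F i).Colorable 2)
    (hdeg : ∀ i, 1 ≤ i → ∀ v, ((F i).neighborSet v).ncard ≤ D)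
    (c : Fin n → Fin n → Fin r) (hsym : ∀ a b, c a b = c b a) (N : ℕ) :
    ∀ X : Finset (Fin n), X.card = N → ∃ P : Finset (Finset (Fin n)),
      (P.card : ℝ) ≤ 64 * D * (r : ℝ) ^ D * (Real.log (N : ℝ) + 2) ∧
      (∀ p ∈ P, ∀ q ∈ P, p ≠ q → Disjoint p q) ∧
      P.biUnion id = X ∧
      ∀ p ∈ P, ∃ (i : ℕ) (_ : 1 ≤ i) (col : Fin r) (f : Fin i ↪ Fin n),
        Finset.univ.map f = p ∧
        ∀ a b, (F i).Adj a b → c (f a) (f b) = col := by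
  induction N using Nat.strong_induction_on with
  | _ N ih =>
  intro X hX
  obtain ⟨K, hK⟩ : ∃ K, K = 64 * D * r ^ D := ⟨_, rfl⟩
  have hKr : (64 * D * (r : ℝ) ^ D) = K := by rw [hK]; push_cast; ring
  have hK64 : 64 ≤ K := by
    have : 0 < D * r ^ D := by positivity
    rw [hK]; nlinarith
  have hKpos : (0:ℝ) < K := by exact_mod_cast (by omega : 0 < K)
  rw [hKr]
  by_cases hsmall : N ≤ 2 * K
  · refine ⟨X.image (fun x => {x}), ?_, ?_, ?_, ?_⟩
    · rw [card_image_of_injective _ (fun a b h => by simpa using h), hX]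
      have : 0 ≤ Real.log (N : ℝ) := Real.log_natCast_nonneg N
      have h2 : (N : ℝ) ≤ 2 * K := by exact_mod_cast hsmall
      nlinarith
    · intro p hp q hq hpq
      simp only [mem_image] at hp hq
      obtain ⟨x, _, rfl⟩ := hp
      obtain ⟨y, _, rfl⟩ := hq
      simpa using fun h : x = y => hpq (by rw [h])
    · ext x; simp
    · intro p hp
      simp only [mem_image] at hp
      obtain ⟨x, _, rfl⟩ := hp
      refine ⟨1, le_rfl, ⟨0, hr⟩, ⟨fun _ => x, fun a b _ => Subsingleton.elim _ _⟩, ?_, ?_⟩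
      · ext y
        simp only [mem_map, mem_univ, true_and, mem_singleton]
        exact ⟨fun ⟨_, h⟩ => h.symm, fun h => ⟨0, h.symm⟩⟩
      · intro a b hab
        exact absurd (Subsingleton.elim a b) hab.ne
  · push Not at hsmall
    obtain ⟨m, hm⟩ : ∃ m, m = N / K + 1 := ⟨_, rfl⟩
    have hdm := Nat.div_add_mod N K
    have hml := Nat.mod_lt N (show K > 0 by omega)
    have hm1 : N ≤ K * m := by rw [hm, mul_add]; omega
    have hm2 : K * m ≤ N + K := by rw [hm, mul_add]; omega
    have hm0 : 1 ≤ m := by rw [hm]; exact Nat.le_add_left 1 _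
    have hmN : m < N := by nlinarith
    have := embed_main (V := X) (W := Fin m) r D hr hD (by rw [Fintype.card_fin]; exact hm0) (F m) (hbip m hm0)
      (by
        intro w
        refine le_trans (le_of_eq ?_) (hdeg m hm0 w)
        rw [← Set.ncard_coe_finset]
        congr 1
        ext b
        simp)
      (fun a b => c a b) (fun a b => hsym a b)
      (by
        simp only [Fintype.card_fin, Fintype.card_coe, hX]
        rw [hK] at hm2 hsmall
        nlinarith)
    obtain ⟨col, f, hf⟩ := this
    let f' : Fin m ↪ Fin n := f.trans (Function.Embedding.subtype _)
    have hsub : univ.map f' ⊆ X := by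
      intro x hx
      obtain ⟨y, _, rfl⟩ := mem_map.mp hx
      exact (f y).2
    have hcard : (X \ univ.map f').card = N - m := by
      rw [card_sdiff_of_subset hsub, hX, card_map]; simp
    obtain ⟨P, h1, h2, h3, h4⟩ := ih (N - m) (by omega) (X \ univ.map f') hcard
    have hdisj : ∀ p ∈ P, Disjoint (univ.map f') p := by
      intro p hp
      have : p ⊆ X \ univ.map f' := by rw [← h3]; exact subset_biUnion_of_mem id hp
      exact disjoint_of_subset_right this disjoint_sdiff
    refine ⟨insert (univ.map f') P, ?_, ?_, ?_, ?_⟩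
    · have hc : ((insert (univ.map f') P).card : ℝ) ≤ P.card + 1 := by
        exact_mod_cast card_insert_le _ _
      have hNp : (0:ℝ) < N := by exact_mod_cast (by omega : 0 < N)
      have hNm : (0:ℝ) < ((N - m : ℕ) : ℝ) := by exact_mod_cast (by omega : 0 < N - m)
      have hl := Real.log_le_sub_one_of_pos (div_pos hNm hNp)
      rw [Real.log_div hNm.ne' hNp.ne', Nat.cast_sub hmN.le, sub_div, div_self hNp.ne'] at hl
      rw [Nat.cast_sub hmN.le, hKr] at h1
      have h5 : (1:ℝ) ≤ K * (m / N) := by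
        rw [← mul_div_assoc, le_div_iff₀ hNp, one_mul]
        exact_mod_cast hm1
      have h6 : Real.log ((N:ℝ) - m) ≤ Real.log N - m / N := by linarith
      have h7 := mul_le_mul_of_nonneg_left h6 hKpos.le
      nlinarith
    · intro p hp q hq hpq
      rcases mem_insert.mp hp with rfl | hp' <;> rcases mem_insert.mp hq with rfl | hq'
      · exact absurd rfl hpq
      · exact hdisj q hq'
      · exact (hdisj p hp').symm
      · exact h2 p hp' q hq' hpq
    · rw [biUnion_insert, h3]
      simpa using hsub
    · intro p hp
      rcases mem_insert.mp hp with rfl | hp'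
      · exact ⟨m, hm0, col, f', rfl, fun a b hab => hf a b hab⟩
      · exact h4 p hp'

end Helpers

/-- Any r-edge-colouring of K_n admits a monochromatic F-tiling of size at most
`64 Δ r^Δ (log n + 2)` for a bipartite Δ-bounded graph sequence F. -/
theorem stmt_5 (r Δ : ℕ) (hr : 0 < r) (hΔ : 0 < Δ)
    (F : (i : ℕ) → SimpleGraph (Fin i))
    (hbip : ∀ i, 1 ≤ i → (F i).Colorable 2)
    (hdeg : ∀ i, 1 ≤ i → ∀ v, ((F i).neighborSet v).ncard ≤ Δ)
    (n : ℕ) (c : Fin n → Fin n → Fin r) (hsym : ∀ a b, c a b = c b a) :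
    ∃ (s : ℕ) (parts : Fin s → Finset (Fin n)),
      (s : ℝ) ≤ 64 * Δ * (r : ℝ) ^ Δ * (Real.log (n : ℝ) + 2) ∧
      (∀ j j', j ≠ j' → Disjoint (parts j) (parts j')) ∧
      Finset.univ.biUnion parts = Finset.univ ∧
      ∀ j, ∃ (i : ℕ) (_ : 1 ≤ i) (col : Fin r) (f : Fin i ↪ Fin n),
        Finset.univ.map f = parts j ∧
        ∀ a b, (F i).Adj a b → c (f a) (f b) = col := by
  classical
  obtain ⟨P, h1, h2, h3, h4⟩ := tiling r Δ n hr hΔ F hbip hdeg c hsym n Finset.univ (by simp)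
  refine ⟨P.card, fun j => (P.equivFin.symm j : Finset (Fin n)), h1, ?_, ?_, ?_⟩
  · intro j j' hjj
    apply h2 _ (P.equivFin.symm j).2 _ (P.equivFin.symm j').2
    intro h
    exact hjj (P.equivFin.symm.injective (Subtype.ext h))
  · rw [← h3]
    ext x
    simp only [Finset.mem_biUnion, Finset.mem_univ, true_and, id]
    constructor
    · rintro ⟨j, hj⟩
      exact ⟨_, (P.equivFin.symm j).2, hj⟩
    · rintro ⟨p, hp, hx⟩
      exact ⟨P.equivFin ⟨p, hp⟩, by simpa using hx⟩
  · intro j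
    exact h4 _ (P.equivFin.symm j).2
end
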